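/- Let T be a finite tree (a connected acyclic simple graph) and let M be a set of vertices of T. Then there exists a set of vertices M' with M ⊆ M' and |M'| ≤ 2|M| such that every connected component C of T − M' has at most 2 neighbors in M', i.e., the set of vertices of M' adjacent in T to some vertex of C has cardinality at most 2. -/

import Mathlib

/-- The set of neighbors in `M'` of a connected component `C` of `T − M'`:
the vertices `q ∈ M'` adjacent in `T` to at least one vertex of `C`. -/
def componentNbrsIn {V : Type*} (T : SimpleGraph V) (M' : Set V)
    (C : (T.induce {v | v ∉ M'}).ConnectedComponent) : Set V :=
  {q | q ∈ M' ∧ ∃ v : ↥{v | v ∉ M'},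
      (T.induce {v | v ∉ M'}).connectedComponentMk v = C ∧ T.Adj q ↑v}

namespace LcaAux

open SimpleGraph

lemma no_two_walks {V : Type*} {T : SimpleGraph V} (hT : T.IsAcyclic) {x x' a : V}
    (h : T.Adj x x') (p : T.Walk x a) (hp : x' ∉ p.support)
    (q : T.Walk a x') (hq : x ∉ q.support) : False := by
  have hb := (isAcyclic_iff_forall_adj_isBridge.1 hT) h
  rw [isBridge_iff_forall_walk_mem_edges] at hb
  have := hb (p.append q)
  rw [Walk.edges_append, List.mem_append] at this
  rcases this with h1 | h1
  · exact hp (Walk.snd_mem_support_of_mem_edges _ h1)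
  · exact hq (Walk.fst_mem_support_of_mem_edges _ h1)

/-- `y` meets all walks between `a` and `b`. -/
def Sep {V : Type*} (T : SimpleGraph V) (y a b : V) : Prop :=
  ∀ p : T.Walk a b, y ∈ p.support

lemma Sep.symm {V : Type*} {T : SimpleGraph V} {y a b : V} (h : Sep T y a b) : Sep T y b a := by
  intro p
  have := h p.reverse
  simpa using this

lemma median {V : Type*} {T : SimpleGraph V} (hT : T.IsAcyclic) {x a : V} (b : V)
    (w : T.Walk x a) : ∃ y, Sep T y a b ∧ Sep T y x a ∧ Sep T y x b := by
  classical
  induction w with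
  | @nil a => exact ⟨a, fun p => p.start_mem_support, fun p => p.start_mem_support,
      fun p => p.start_mem_support⟩
  | @cons x x' a hadj w ih =>
    obtain ⟨y, h1, h2, h3⟩ := ih
    by_cases hy : y = x'
    · subst hy
      by_cases ha : Sep T y x a
      · by_cases hb : Sep T y x b
        · exact ⟨y, h1, ha, hb⟩
        · refine ⟨x, ?_, fun p => by simp, fun p => by simp⟩
          simp only [Sep, not_forall] at hb
          obtain ⟨p, hp⟩ := hb
          apply Sep.symm
          intro q
          by_contra hq
          have hyq := h1.symm q
          exact no_two_walks hT hadj p hp (q.takeUntil y hyq)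
            (fun h => hq (Walk.support_takeUntil_subset_support _ hyq h))
      · refine ⟨x, ?_, fun p => by simp, fun p => by simp⟩
        simp only [Sep, not_forall] at ha
        obtain ⟨p, hp⟩ := ha
        intro q
        by_contra hq
        have hyq := h1 q
        exact no_two_walks hT hadj p hp (q.takeUntil y hyq)
            (fun h => hq (Walk.support_takeUntil_subset_support _ hyq h))
    · refine ⟨y, h1, fun p => ?_, fun p => ?_⟩
      · have := h2 (Walk.cons hadj.symm p)
        simpa [hy] using this
      · have := h3 (Walk.cons hadj.symm p)
        simpa [hy] using this

/-- `u` and `v` lie in the same component of `T - M`. -/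
def Same {V : Type*} (T : SimpleGraph V) (M : Set V) (u v : V) : Prop :=
  ∃ p : T.Walk u v, ∀ z ∈ p.support, z ∉ M

lemma Same.symm {V : Type*} {T : SimpleGraph V} {M : Set V} {u v : V}
    (h : Same T M u v) : Same T M v u := by
  obtain ⟨p, hp⟩ := h
  exact ⟨p.reverse, by simpa using hp⟩

lemma Same.trans {V : Type*} {T : SimpleGraph V} {M : Set V} {u v w : V}
    (h : Same T M u v) (h' : Same T M v w) : Same T M u w := by
  obtain ⟨p, hp⟩ := h
  obtain ⟨q, hq⟩ := h'
  refine ⟨p.append q, fun z hz => ?_⟩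
  rw [Walk.mem_support_append_iff] at hz
  exact hz.elim (hp z) (hq z)

lemma Same.mono {V : Type*} {T : SimpleGraph V} {M M' : Set V} {u v : V} (hM : M ⊆ M')
    (h : Same T M' u v) : Same T M u v := by
  obtain ⟨p, hp⟩ := h
  exact ⟨p, fun z hz hzM => hp z hz (hM hzM)⟩

lemma Same.of_adj {V : Type*} {T : SimpleGraph V} {M : Set V} {u v : V} (h : T.Adj u v)
    (hu : u ∉ M) (hv : v ∉ M) : Same T M u v :=
  ⟨h.toWalk, by simp [hu, hv]⟩

lemma same_iff {V : Type*} {T : SimpleGraph V} {M : Set V} (u v : ↥{v | v ∉ M}) :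
    (T.induce {v | v ∉ M}).connectedComponentMk u =
      (T.induce {v | v ∉ M}).connectedComponentMk v ↔ Same T M u v := by
  rw [ConnectedComponent.eq]
  constructor
  · rintro ⟨p⟩
    induction p with
    | @nil u => exact ⟨Walk.nil, fun z hz => by
        rw [Walk.support_nil, List.mem_singleton] at hz
        rw [hz]
        exact u.2⟩
    | @cons u v w h p ih => exact (Same.of_adj (by simpa using h) u.2 v.2).trans ih
  · rintro ⟨p, hp⟩
    exact ⟨p.induce _ hp⟩

/-- neighbours of the component of `v` -/
def Nb {V : Type*} (T : SimpleGraph V) (M : Set V) (v : V) : Set V :=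
  {q | q ∈ M ∧ ∃ w, Same T M w v ∧ T.Adj q w}

lemma nbrs_eq {V : Type*} {T : SimpleGraph V} {M : Set V} (v : ↥{v | v ∉ M}) :
    componentNbrsIn T M ((T.induce {v | v ∉ M}).connectedComponentMk v) = Nb T M v := by
  ext q
  simp only [componentNbrsIn, Nb, Set.mem_setOf_eq]
  refine and_congr_right fun _ => ⟨?_, ?_⟩
  · rintro ⟨w, hw, h⟩
    exact ⟨w, (same_iff w v).1 hw, h⟩
  · rintro ⟨w, hw, h⟩
    have hwM : w ∉ M := by
      obtain ⟨p, hp⟩ := hw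
      exact hp w p.start_mem_support
    exact ⟨⟨w, hwM⟩, (same_iff ⟨w, hwM⟩ v).2 hw, h⟩

lemma nb_walk {V : Type*} {T : SimpleGraph V} {M : Set V} {v q w : V}
    (hq : q ∈ Nb T M v) (hw : Same T M v w) :
    ∃ p : T.Walk q w, ∀ z ∈ p.support, z = q ∨ Same T M z w := by
  classical
  obtain ⟨_, u, hu, hadj⟩ := hq
  obtain ⟨p, hp⟩ := hu.trans hw
  refine ⟨Walk.cons hadj p, fun z hz => ?_⟩
  rw [Walk.support_cons, List.mem_cons] at hz
  refine hz.imp id fun hz => ⟨p.dropUntil z hz, fun t ht => hp t ?_⟩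
  exact Walk.support_dropUntil_subset_support _ hz ht

lemma Same.notMem_left {V : Type*} {T : SimpleGraph V} {M : Set V} {u v : V}
    (h : Same T M u v) : u ∉ M := by
  obtain ⟨p, hp⟩ := h
  exact hp u p.start_mem_support

/-- a vertex of `M` separating two neighbours of a component is one of them -/
lemma sep_nb {V : Type*} {T : SimpleGraph V} {M : Set V} {v q q' y : V}
    (hq : q ∈ Nb T M v) (hq' : q' ∈ Nb T M v) (hy : y ∈ M) (hs : Sep T y q q') :
    y = q ∨ y = q' := by
  obtain ⟨_, u, hu, hadj⟩ := hq'
  obtain ⟨p, hp⟩ := nb_walk hq hu.symm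
  have := hs (p.concat hadj.symm)
  rw [Walk.support_concat] at this
  simp only [List.concat_eq_append, List.mem_append, List.mem_singleton] at this
  rcases this with h | h
  · rcases hp y h with h | h
    · exact Or.inl h
    · exact absurd hy h.notMem_left
  · exact Or.inr h

lemma nb_sub {V : Type*} {T : SimpleGraph V} {M M' : Set V} (hM : M ⊆ M') {v q : V}
    (hq : q ∈ Nb T M' v) : q ∈ Nb T M v ∨ (q ∈ M' ∧ q ∉ M ∧ Same T M q v) := by
  obtain ⟨hqM, w, hw, hadj⟩ := hq
  by_cases h : q ∈ M
  · exact Or.inl ⟨h, w, hw.mono hM, hadj⟩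
  · exact Or.inr ⟨hqM, h, (Same.of_adj hadj h (hw.mono hM).notMem_left).trans (hw.mono hM)⟩

lemma nb_congr {V : Type*} {T : SimpleGraph V} {M : Set V} {u v : V} (h : Same T M u v) :
    Nb T M u = Nb T M v := by
  ext q
  exact and_congr_right fun _ => exists_congr fun w =>
    and_congr_left fun _ => ⟨fun k => k.trans h, fun k => k.trans h.symm⟩

lemma step {V : Type*} [Finite V] {T : SimpleGraph V} (hT : T.IsTree) (M : Set V) (x : V)
    (hx : x ∉ M) (hM : ∀ v, v ∉ M → (Nb T M v).ncard ≤ 2) :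
    ∃ y, ∀ v, v ∉ insert x (insert y M) → (Nb T (insert x (insert y M)) v).ncard ≤ 2 := by
  have hxx : Same T M x x := ⟨Walk.nil, by simpa using hx⟩
  -- it suffices to have `y` in the component of `x` or in `M`
  have key : ∀ y, (y ∈ M ∨ Same T M y x) →
      (∀ v, Same T M v x → v ∉ insert x (insert y M) →
        (Nb T (insert x (insert y M)) v).ncard ≤ 2) →
      ∀ v, v ∉ insert x (insert y M) → (Nb T (insert x (insert y M)) v).ncard ≤ 2 := by
    intro y hy h v hv
    by_cases hvx : Same T M v x
    · exact h v hvx hv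
    · have hsub : M ⊆ insert x (insert y M) := fun z hz => by simp [hz]
      have hvM : v ∉ M := fun h => hv (hsub h)
      refine le_trans (Set.ncard_le_ncard (fun q hq => ?_) (Set.toFinite _)) (hM v hvM)
      rcases nb_sub hsub hq with h | ⟨h1, h2, h3⟩
      · exact h
      · exfalso
        rcases h1 with rfl | rfl | h1
        · exact hvx h3.symm
        · exact hvx (h3.symm.trans (hy.resolve_left h2))
        · exact h2 h1
  rcases (hM x hx).lt_or_eq with hlt | heq
  · refine ⟨x, key x (Or.inr hxx) fun v hvx _ => ?_⟩
    have hsub : M ⊆ insert x (insert x M) := fun z hz => by simp [hz]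
    have : Nb T (insert x (insert x M)) v ⊆ insert x (Nb T M x) := by
      intro q hq
      rcases nb_sub hsub hq with h | ⟨h1, h2, h3⟩
      · rw [nb_congr hvx] at h
        exact Or.inr h
      · left
        simpa [h2] using h1
    have h1 := Set.ncard_le_ncard this (Set.toFinite _)
    have h2 := Set.ncard_insert_le x (Nb T M x)
    omega
  · obtain ⟨a, b, hab, hN⟩ := Set.ncard_eq_two.1 heq
    obtain ⟨w⟩ := hT.1.preconnected x a
    obtain ⟨y, h1, h2, h3⟩ := median hT.2 b w
    have ha : a ∈ Nb T M x := by simp [hN]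
    have hy : y ∈ M ∨ Same T M y x := by
      obtain ⟨p, hp⟩ := nb_walk ha hxx
      rcases hp y (h2.symm p) with rfl | h
      · exact Or.inl ha.1
      · exact Or.inr h
    refine ⟨y, key y hy fun v hvx hv => ?_⟩
    have hsub : M ⊆ insert x (insert y M) := fun z hz => by simp [hz]
    have hmem : ∀ q ∈ Nb T (insert x (insert y M)) v, q = a ∨ q = b ∨ q = x ∨ q = y := by
      intro q hq
      rcases nb_sub hsub hq with h | ⟨h1, h2, h3⟩
      · rw [nb_congr hvx, hN] at h
        rcases h with h | h
        · exact Or.inl h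
        · exact Or.inr (Or.inl h)
      · rcases h1 with h | h | h
        · simp [h]
        · simp [h]
        · exact absurd h h2
    have hsep : ∀ q ∈ Nb T (insert x (insert y M)) v, ∀ q' ∈ Nb T (insert x (insert y M)) v,
        q ≠ y → q' ≠ y → q = q' := by
      intro q hq q' hq' hqy hqy'
      by_contra hne
      have hs : Sep T y q q' := by
        have h1' := h1.symm
        have h2' := h2.symm
        have h3' := h3.symm
        rcases hmem q hq with rfl | rfl | rfl | rfl <;>
        rcases hmem q' hq' with rfl | rfl | rfl | rfl <;>
        first | assumption | exact absurd rfl hne | exact absurd rfl hqy | exact absurd rfl hqy'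
      rcases sep_nb hq hq' (by simp) hs with h | h
      · exact hqy h.symm
      · exact hqy' h.symm
    have hle : (Nb T (insert x (insert y M)) v \ {y}).ncard ≤ 1 := by
      rw [Set.ncard_le_one (Set.toFinite _)]
      intro q hq q' hq'
      exact hsep q hq.1 q' hq'.1 hq.2 hq'.2
    have := Set.ncard_le_ncard_diff_add_ncard (Nb T (insert x (insert y M)) v) {y}
      (Set.toFinite _)
    rw [Set.ncard_singleton] at this
    omega

lemma main {V : Type*} [Finite V] {T : SimpleGraph V} (hT : T.IsTree) (M : Set V) :
    ∃ M' : Set V, M ⊆ M' ∧ M'.ncard ≤ 2 * M.ncard ∧ ∀ v, v ∉ M' → (Nb T M' v).ncard ≤ 2 := by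
  induction M, Set.toFinite M using Set.Finite.induction_on with
  | empty =>
    refine ⟨∅, subset_rfl, by simp, fun v _ => ?_⟩
    have : Nb T ∅ v = ∅ := by ext; simp [Nb]
    simp [this]
  | @insert x M hx _ ih =>
    obtain ⟨M', hsub, hc, h⟩ := ih
    have hcard := Set.ncard_insert_of_notMem hx (Set.toFinite M)
    by_cases hxM : x ∈ M'
    · exact ⟨M', Set.insert_subset hxM hsub, by omega, h⟩
    · obtain ⟨y, hy⟩ := step hT M' x hxM h
      refine ⟨_, Set.insert_subset_insert (hsub.trans (Set.subset_insert y M')), ?_, hy⟩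
      have h1 := Set.ncard_insert_le x (insert y M')
      have h2 := Set.ncard_insert_le y M'
      omega

end LcaAux

/-- LCA-closure lemma: for every finite tree `T` and vertex set `M`, there is a
superset `M'` of `M` with `|M'| ≤ 2|M|` such that every connected component of
`T − M'` has at most two neighbors in `M'`. -/
theorem lca_closure_bound {V : Type*} [Fintype V]
    (T : SimpleGraph V) (hT : T.IsTree) (M : Set V) :
    ∃ M' : Set V, M ⊆ M' ∧ M'.ncard ≤ 2 * M.ncard ∧
      ∀ C : (T.induce {v | v ∉ M'}).ConnectedComponent,
        (componentNbrsIn T M' C).ncard ≤ 2 := by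
  obtain ⟨M', h1, h2, h3⟩ := LcaAux.main hT M
  refine ⟨M', h1, h2, fun C => ?_⟩
  induction C using SimpleGraph.ConnectedComponent.ind with
  | h v =>
    rw [LcaAux.nbrs_eq]
    exact h3 v v.2
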